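/- Let E be a nonempty finite set, V a finite-dimensional real normed vector space, 1 ≤ p < ∞, and q the conjugate exponent with (1/p) + (1/q) = 1. Then for every f : E → V, the weak norm ‖f‖_{p,ν} equals the supremum of ‖∑_{x ∈ E} h(x) f(x)‖_V over all real-valued functions h on E with ‖h‖_q ≤ 1. -/

import Mathlib

open scoped ENNReal

/-- The `ℓ^p` norm of a function on a nonempty finite set with values in a
normed vector space: for `p < ∞` it is `(∑ x, ‖f x‖ ^ p)^(1/p)`, and for
`p = ∞` it is `max {‖f x‖ : x ∈ E}`. -/
noncomputable def pNorm {E V : Type*} [Fintype E] [Nonempty E]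
    [NormedAddCommGroup V] (p : ℝ≥0∞) (f : E → V) : ℝ :=
  if p = ∞ then ⨆ x, ‖f x‖ else (∑ x, ‖f x‖ ^ p.toReal) ^ (1 / p.toReal)


theorem aux_conj (p q : ℝ≥0∞) (hp : 1 ≤ p) (hp' : p ≠ ∞) (hpq : p⁻¹ + q⁻¹ = 1) :
    (p = 1 ∧ q = ∞) ∨ (q ≠ ∞ ∧ p.toReal.HolderConjugate q.toReal) := by
  by_cases hq : q = ∞
  · left
    subst hq
    simpa using hpq
  · right
    refine ⟨hq, ?_⟩
    have h1 : p ≠ 1 := by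
      rintro rfl
      apply hq
      rw [inv_one] at hpq
      have : (1 : ℝ≥0∞) + q⁻¹ = 1 + 0 := by simpa using hpq
      have := (ENNReal.add_right_inj ENNReal.one_ne_top).1 this
      simpa using this
    have hp1 : 1 < p := lt_of_le_of_ne hp (Ne.symm h1)
    have hq0 : q ≠ 0 := by
      rintro rfl
      simp at hpq
    have hp0 : p ≠ 0 := (zero_lt_one.trans hp1).ne'
    rw [Real.holderConjugate_iff]
    constructor
    · have := (ENNReal.toReal_lt_toReal ENNReal.one_ne_top hp').2 hp1
      simpa using this
    · have := congrArg ENNReal.toReal hpq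
      rw [ENNReal.toReal_add (by simpa using hp0) (by simpa using hq0)] at this
      simpa using this

theorem aux_holder {E : Type*} [Fintype E] [Nonempty E]
    (p q : ℝ≥0∞) (hp : 1 ≤ p) (hp' : p ≠ ∞) (hpq : p⁻¹ + q⁻¹ = 1)
    (a h : E → ℝ) (hh : pNorm q h ≤ 1) :
    ∑ x, h x * a x ≤ (∑ x, |a x| ^ p.toReal) ^ (1 / p.toReal) := by
  rcases aux_conj p q hp hp' hpq with ⟨rfl, rfl⟩ | ⟨hq, hc⟩
  · simp only [pNorm, if_true] at hh
    simp only [ENNReal.toReal_one, Real.rpow_one, div_one]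
    refine Finset.sum_le_sum fun x _ => ?_
    have h1 : |h x| ≤ 1 := (le_ciSup (f := fun x => ‖h x‖) (Set.finite_range _).bddAbove x).trans hh
    calc h x * a x ≤ |h x * a x| := le_abs_self _
      _ = |h x| * |a x| := abs_mul _ _
      _ ≤ 1 * |a x| := by gcongr
      _ = _ := one_mul _
  · simp only [pNorm, if_neg hq, Real.norm_eq_abs] at hh
    have := Real.inner_le_Lp_mul_Lq Finset.univ h a hc.symm
    refine this.trans ?_
    exact mul_le_of_le_one_left (by positivity) hh

theorem aux_sharp {E : Type*} [Fintype E] [Nonempty E]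
    (p q : ℝ≥0∞) (hp : 1 ≤ p) (hp' : p ≠ ∞) (hpq : p⁻¹ + q⁻¹ = 1)
    (a : E → ℝ) : ∃ h : E → ℝ, pNorm q h ≤ 1 ∧
    ∑ x, h x * a x = (∑ x, |a x| ^ p.toReal) ^ (1 / p.toReal) := by
  have hs : ∀ r : ℝ, |((SignType.sign r : SignType) : ℝ)| ≤ (1 : ℝ) := by
    intro r
    rcases lt_trichotomy r 0 with h | h | h <;> simp [h]
  rcases aux_conj p q hp hp' hpq with ⟨rfl, rfl⟩ | ⟨hq, hc⟩
  · refine ⟨fun x => (SignType.sign (a x) : ℝ), ?_, ?_⟩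
    · simp only [pNorm, if_true]
      exact ciSup_le fun x => hs _
    · simp
  · obtain ⟨⟨g, hg, hge⟩, -⟩ := NNReal.isGreatest_Lp Finset.univ (fun x => ‖a x‖₊) hc
    refine ⟨fun x => SignType.sign (a x) * g x, ?_, ?_⟩
    · simp only [pNorm, if_neg hq, Real.norm_eq_abs]
      have hq0 := hc.symm.pos
      refine Real.rpow_le_one (by positivity) ?_ (by positivity)
      have hg' : ∑ x, (g x : ℝ) ^ q.toReal ≤ 1 := by exact_mod_cast hg
      refine le_trans (Finset.sum_le_sum fun x _ => ?_) hg'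
      refine Real.rpow_le_rpow (abs_nonneg _) ?_ hq0.le
      rw [abs_mul, NNReal.abs_eq]
      exact mul_le_of_le_one_left (g x).2 (hs _)
    · have := congrArg NNReal.toReal hge
      push_cast at this
      simp only [Real.norm_eq_abs] at this
      rw [← this]
      refine Finset.sum_congr rfl fun x _ => ?_
      rw [mul_right_comm, sign_mul_self]

theorem stmt_11 {E V : Type*} [Fintype E] [Nonempty E]
    [NormedAddCommGroup V] [NormedSpace ℝ V] [FiniteDimensional ℝ V]
    (p q : ℝ≥0∞) (hp : 1 ≤ p) (hp' : p ≠ ∞) (hpq : p⁻¹ + q⁻¹ = 1)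
    (f : E → V) :
    sSup {r : ℝ | ∃ lam : V →L[ℝ] ℝ, ‖lam‖ ≤ 1 ∧
        r = (∑ x, |lam (f x)| ^ p.toReal) ^ (1 / p.toReal)}
      = sSup {r : ℝ | ∃ h : E → ℝ, pNorm q h ≤ 1 ∧
          r = ‖∑ x, h x • f x‖} := by
  have key1 : ∀ h : E → ℝ, pNorm q h ≤ 1 → ∃ lam : V →L[ℝ] ℝ, ‖lam‖ ≤ 1 ∧
      ‖∑ x, h x • f x‖ ≤ (∑ x, |lam (f x)| ^ p.toReal) ^ (1 / p.toReal) := by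
    intro h hh
    obtain ⟨lam, h1, h2⟩ := exists_dual_vector'' ℝ (∑ x, h x • f x)
    refine ⟨lam, h1, ?_⟩
    have := aux_holder p q hp hp' hpq (fun x => lam (f x)) h hh
    simp only [map_sum, map_smul, smul_eq_mul, RCLike.ofReal_real_eq_id, id] at h2
    rwa [← h2]
  have key2 : ∀ lam : V →L[ℝ] ℝ, ‖lam‖ ≤ 1 → ∃ h : E → ℝ, pNorm q h ≤ 1 ∧
      (∑ x, |lam (f x)| ^ p.toReal) ^ (1 / p.toReal) ≤ ‖∑ x, h x • f x‖ := by
    intro lam hl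
    obtain ⟨h, h1, h2⟩ := aux_sharp p q hp hp' hpq (fun x => lam (f x))
    refine ⟨h, h1, ?_⟩
    rw [← h2]
    have : ∑ x, h x * lam (f x) = lam (∑ x, h x • f x) := by simp
    rw [this]
    exact (le_abs_self _).trans ((lam.le_of_opNorm_le hl _).trans (one_mul _).le)
  have bd : ∀ lam : V →L[ℝ] ℝ, ‖lam‖ ≤ 1 →
      (∑ x, |lam (f x)| ^ p.toReal) ^ (1 / p.toReal) ≤
      (∑ x, ‖f x‖ ^ p.toReal) ^ (1 / p.toReal) := by
    intro lam hl
    have h0 : 0 ≤ p.toReal := ENNReal.toReal_nonneg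
    refine Real.rpow_le_rpow (by positivity) (Finset.sum_le_sum fun x _ => ?_) (by positivity)
    exact Real.rpow_le_rpow (abs_nonneg _) ((lam.le_of_opNorm_le hl _).trans (one_mul _).le) h0
  obtain ⟨h0, hh0, -⟩ := key2 0 (by simp)
  apply le_antisymm
  · refine csSup_le ⟨_, 0, by simp, rfl⟩ ?_
    rintro r ⟨lam, hl, rfl⟩
    obtain ⟨h, hh, hle⟩ := key2 lam hl
    refine hle.trans (le_csSup ⟨(∑ x, ‖f x‖ ^ p.toReal) ^ (1 / p.toReal), ?_⟩ ⟨h, hh, rfl⟩)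
    rintro r ⟨h, hh, rfl⟩
    obtain ⟨lam, hl, hle⟩ := key1 h hh
    exact hle.trans (bd lam hl)
  · refine csSup_le ⟨_, h0, hh0, rfl⟩ ?_
    rintro r ⟨h, hh, rfl⟩
    obtain ⟨lam, hl, hle⟩ := key1 h hh
    refine hle.trans (le_csSup ⟨(∑ x, ‖f x‖ ^ p.toReal) ^ (1 / p.toReal), ?_⟩ ⟨lam, hl, rfl⟩)
    rintro r ⟨lam, hl, rfl⟩
    exact bd lam hl
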